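/- Let C be an abelian category with enough projectives and injectives and X ⊆ C an (n+2)-rigid precovering subcategory with Proj(C) ⊆ X^{⊥_{≤ n+1}}. Then the exact category X^{⊥_{≤ n+1}} has enough projectives, and its projective objects are exactly add(X ∪ Proj(C)). -/

import Mathlib

open CategoryTheory CategoryTheory.Limits CategoryTheory.Abelian

universe w v u

variable {C : Type u} [Category.{v} C] [Abelian C] [HasExt.{w} C]

/-- The right orthogonal `X^{⊥_{≤ m}}`: objects `N` with `Ext^i(A, N) = 0` for all
`A ∈ X` and `1 ≤ i ≤ m`. -/
def rightPerpLE (X : Set C) (m : ℕ) : Set C :=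
  {N | ∀ A ∈ X, ∀ i : ℕ, 1 ≤ i → i ≤ m → Subsingleton (Abelian.Ext A N i)}

/-- The left orthogonal `^{⊥_{≤ m}}X`. -/
def leftPerpLE (X : Set C) (m : ℕ) : Set C :=
  {M | ∀ A ∈ X, ∀ i : ℕ, 1 ≤ i → i ≤ m → Subsingleton (Abelian.Ext M A i)}

/-- `X` is `m+1`-rigid: `Ext^i(X, X') = 0` for all `X, X' ∈ X`, `1 ≤ i ≤ m`. -/
def IsRigidLE (X : Set C) (m : ℕ) : Prop :=
  ∀ A ∈ X, ∀ B ∈ X, ∀ i : ℕ, 1 ≤ i → i ≤ m → Subsingleton (Abelian.Ext A B i)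

/-- `g : A ⟶ M` is a right `X`-approximation (an `X`-precover) of `M`. -/
def IsPrecover (X : Set C) {A M : C} (g : A ⟶ M) : Prop :=
  A ∈ X ∧ ∀ A' ∈ X, ∀ h : A' ⟶ M, ∃ t : A' ⟶ A, t ≫ g = h

/-- `f : M ⟶ A` is a left `X`-approximation (an `X`-preenvelope) of `M`. -/
def IsPreenvelope (X : Set C) {A M : C} (f : M ⟶ A) : Prop :=
  A ∈ X ∧ ∀ A' ∈ X, ∀ h : M ⟶ A', ∃ t : A ⟶ A', f ≫ t = h

/-- `X` is precovering in the full subcategory `D`. -/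
def IsPrecoveringIn (D X : Set C) : Prop :=
  ∀ M ∈ D, ∃ (A : C) (g : A ⟶ M), IsPrecover X g

/-- `X` is preenveloping in the full subcategory `D`. -/
def IsPreenvelopingIn (D X : Set C) : Prop :=
  ∀ M ∈ D, ∃ (A : C) (f : M ⟶ A), IsPreenvelope X f

/-- `addClosure S` is the closure of `S` under finite direct sums and direct summands. -/
inductive addClosure (S : Set C) : C → Prop
  | of {A : C} (h : A ∈ S) : addClosure S A
  | zero (O : C) (h : IsZero O) : addClosure S O
  | biprod {A B : C} : addClosure S A → addClosure S B → addClosure S (A ⊞ B)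
  | retract {A B : C} (i : A ⟶ B) (r : B ⟶ A) (hir : i ≫ r = 𝟙 A) :
      addClosure S B → addClosure S A

/-- The class of projective objects of `C`, as a set. -/
def projSet : Set C := {P | Projective P}

/-- The class of injective objects of `C`, as a set. -/
def injSet : Set C := {I | Injective I}

/-- The projective objects of an extension-closed subcategory `R` (with the exact structure
inherited from `C`): objects `P ∈ R` with `Ext^1(P, N) = 0` (computed in `C`) for all `N ∈ R`. -/
def projIn (R : Set C) : Set C :=
  {P | P ∈ R ∧ ∀ N ∈ R, Subsingleton (Abelian.Ext P N 1)}

/-- The injective objects of an extension-closed subcategory `R`. -/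
def injIn (R : Set C) : Set C :=
  {I | I ∈ R ∧ ∀ N ∈ R, Subsingleton (Abelian.Ext N I 1)}

/-!
For `N` in `R = X^{⊥_{≤ n+1}}`, add to an `X`-precover `A₀ ⟶ N` an epimorphism `Q ⟶ N` from a
projective: the resulting map `A₀ ⊞ Q ⟶ N` is an epimorphism, and every map from an object of `X`
to `N` still lifts along it. The lifting property kills `Ext¹(X, -)` of its kernel and the long
exact sequence kills the higher groups, so the kernel lies in `R`. When `N` is itself projective
in `R`, this sequence splits, and `N` is a direct summand of `A₀ ⊞ Q`.
-/

section ExtVanishing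

variable {A B N : C} {i : ℕ}

lemma subsingleton_ext_of_isZero_left (hA : IsZero A) : Subsingleton (Ext A N i) := by
  refine subsingleton_of_forall_eq 0 fun e => ?_
  rw [← Ext.mk₀_id_comp e, hA.eq_zero_of_src (𝟙 A), Ext.mk₀_zero, Ext.zero_comp]

lemma subsingleton_ext_of_isZero_right (hA : IsZero A) : Subsingleton (Ext N A i) := by
  refine subsingleton_of_forall_eq 0 fun e => ?_
  rw [← Ext.comp_mk₀_id e, hA.eq_zero_of_src (𝟙 A), Ext.mk₀_zero, Ext.comp_zero]

lemma subsingleton_ext_of_retract_left (h : Retract A B) [Subsingleton (Ext B N i)] :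
    Subsingleton (Ext A N i) := by
  refine subsingleton_of_forall_eq 0 fun e => ?_
  rw [← Ext.mk₀_id_comp e, ← h.retract, ← Ext.mk₀_comp_mk₀_assoc,
    Subsingleton.elim ((Ext.mk₀ h.r).comp e (zero_add i)) 0, Ext.comp_zero]

lemma subsingleton_ext_of_retract_right (h : Retract A B) [Subsingleton (Ext N B i)] :
    Subsingleton (Ext N A i) := by
  refine subsingleton_of_forall_eq 0 fun e => ?_
  rw [← Ext.comp_mk₀_id e, ← h.retract, ← Ext.mk₀_comp_mk₀, ← Ext.comp_assoc_of_third_deg_zero,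
    Subsingleton.elim (e.comp (Ext.mk₀ h.i) (add_zero i)) 0, Ext.zero_comp]

end ExtVanishing

section ShortExact

variable {S : ShortComplex C}

lemma isSplitEpi_g_of_subsingleton_ext (hS : S.ShortExact) [Subsingleton (Ext S.X₃ S.X₁ 1)] :
    IsSplitEpi S.g := by
  obtain ⟨x, hx⟩ := Ext.covariant_sequence_exact₃ S.X₃ hS (Ext.mk₀ (𝟙 S.X₃)) (zero_add 1)
    (Subsingleton.elim _ _)
  obtain ⟨s, rfl⟩ := (Ext.mk₀_bijective _ _).2 x
  rw [Ext.mk₀_comp_mk₀] at hx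
  exact ⟨⟨⟨s, (Ext.mk₀_bijective _ _).1 hx⟩⟩⟩

lemma subsingleton_ext_X₁_one_of_lift (hS : S.ShortExact) {A : C} [Subsingleton (Ext A S.X₂ 1)]
    (hlift : ∀ f : A ⟶ S.X₃, ∃ t : A ⟶ S.X₂, t ≫ S.g = f) : Subsingleton (Ext A S.X₁ 1) := by
  refine subsingleton_of_forall_eq 0 fun e => ?_
  obtain ⟨y, rfl⟩ := Ext.covariant_sequence_exact₁ A hS e (Subsingleton.elim _ _) (zero_add 1)
  obtain ⟨f, rfl⟩ := (Ext.mk₀_bijective _ _).2 y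
  obtain ⟨t, rfl⟩ := hlift f
  rw [← Ext.mk₀_comp_mk₀, Ext.comp_assoc_of_second_deg_zero, hS.comp_extClass, Ext.comp_zero]

lemma subsingleton_ext_X₁_succ (hS : S.ShortExact) {A : C} {i : ℕ} [Subsingleton (Ext A S.X₃ i)]
    [Subsingleton (Ext A S.X₂ (i + 1))] : Subsingleton (Ext A S.X₁ (i + 1)) := by
  refine subsingleton_of_forall_eq 0 fun e => ?_
  obtain ⟨y, rfl⟩ := Ext.covariant_sequence_exact₁ A hS e (Subsingleton.elim _ _) rfl
  rw [Subsingleton.elim y 0, Ext.zero_comp]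

end ShortExact

section Orthogonals

variable {X : Set C} {m : ℕ}

lemma rightPerpLE_antitone (X : Set C) : Antitone (rightPerpLE X) :=
  fun _ _ hkm _ hN A hA i h1 hi => hN A hA i h1 (hi.trans hkm)

lemma leftPerpLE_antitone (X : Set C) : Antitone (leftPerpLE X) :=
  fun _ _ hkm _ hM A hA i h1 hi => hM A hA i h1 (hi.trans hkm)

lemma IsRigidLE.subset_rightPerpLE (h : IsRigidLE X m) : X ⊆ rightPerpLE X m :=
  fun B hB A hA => h A hA B hB

lemma subset_leftPerpLE_rightPerpLE (X : Set C) (m : ℕ) : X ⊆ leftPerpLE (rightPerpLE X m) m :=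
  fun A hA _ hN => hN A hA

lemma projSet_subset_leftPerpLE (X : Set C) (m : ℕ) : projSet ⊆ leftPerpLE X m := by
  intro P (hP : Projective P) A _ i h1 _
  obtain ⟨j, rfl⟩ := Nat.exists_eq_add_of_le' h1
  exact Ext.subsingleton_of_projective P A j

lemma addClosure_subset_rightPerpLE {S : Set C} (hS : S ⊆ rightPerpLE X m) :
    {M | addClosure S M} ⊆ rightPerpLE X m := by
  intro M hM A hA i h1 hi
  induction hM with
  | of h => exact hS h A hA i h1 hi
  | zero _ hO => exact subsingleton_ext_of_isZero_right hO
  | biprod _ _ _ _ => exact Ext.addEquivBiprod.toEquiv.subsingleton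
  | retract s r hsr _ _ => exact subsingleton_ext_of_retract_right ⟨s, r, hsr⟩

lemma addClosure_subset_leftPerpLE {S : Set C} (hS : S ⊆ leftPerpLE X m) :
    {M | addClosure S M} ⊆ leftPerpLE X m := by
  intro M hM A hA i h1 hi
  induction hM with
  | of h => exact hS h A hA i h1 hi
  | zero _ hO => exact subsingleton_ext_of_isZero_left hO
  | biprod _ _ _ _ => exact Ext.biprodAddEquiv.toEquiv.subsingleton
  | retract s r hsr _ _ => exact subsingleton_ext_of_retract_left ⟨s, r, hsr⟩

lemma X₁_mem_rightPerpLE_of_lift {S : ShortComplex C} (hS : S.ShortExact)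
    (h₂ : S.X₂ ∈ rightPerpLE X (m + 1)) (h₃ : S.X₃ ∈ rightPerpLE X m)
    (hlift : ∀ A ∈ X, ∀ f : A ⟶ S.X₃, ∃ t : A ⟶ S.X₂, t ≫ S.g = f) :
    S.X₁ ∈ rightPerpLE X (m + 1) := by
  intro A hA i h1 hi
  have := h₂ A hA i h1 hi
  obtain rfl | h2 := h1.eq_or_lt
  · exact subsingleton_ext_X₁_one_of_lift hS (hlift A hA)
  · obtain ⟨j, rfl⟩ := Nat.exists_eq_add_of_le' h1
    have := h₃ A hA j (by lia) (by lia)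
    exact subsingleton_ext_X₁_succ hS

end Orthogonals

section Projectives

variable {X : Set C} {n : ℕ}

/-- `S` generates the exact category `R`: every object `N` of `R` fits in a conflation
`A → P → N` with `A ∈ R` and `P ∈ S`. Thus `IsGeneratingIn R (projIn R)` says that `R` has enough
projectives. Membership of `P` in `R` is not part of the definition. -/
def IsGeneratingIn (R S : Set C) : Prop :=
  ∀ N ∈ R, ∃ (A P : C) (i : A ⟶ P) (p : P ⟶ N) (w : i ≫ p = 0),
    (ShortComplex.mk i p w).ShortExact ∧ A ∈ R ∧ P ∈ S

lemma mem_projIn_iff {R : Set C} {P : C} : P ∈ projIn R ↔ P ∈ R ∧ P ∈ leftPerpLE R 1 := by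
  refine and_congr_right fun _ => forall₂_congr fun N _ => ⟨fun h i h1 hi => ?_, fun h => ?_⟩
  · obtain rfl := le_antisymm hi h1
    exact h
  · exact h 1 le_rfl le_rfl

lemma projIn_subset_addClosure {R S : Set C} (h : IsGeneratingIn R {M | addClosure S M}) :
    projIn R ⊆ {M | addClosure S M} := by
  intro P hP
  obtain ⟨A, Q, i, p, w, hS, hA, hQ⟩ := h P hP.1
  have : Subsingleton (Ext P A 1) := hP.2 A hA
  have : IsSplitEpi p := isSplitEpi_g_of_subsingleton_ext hS
  exact .retract (section_ p) p (IsSplitEpi.id p) hQ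

lemma addClosure_union_projSet_subset_projIn (hrigid : IsRigidLE X (n + 1))
    (hproj : projSet ⊆ rightPerpLE X (n + 1)) :
    {M | addClosure (X ∪ projSet) M} ⊆ projIn (rightPerpLE X (n + 1)) := by
  intro P hP
  refine mem_projIn_iff.2 ⟨?_, leftPerpLE_antitone _ (Nat.le_add_left 1 n) ?_⟩
  · exact addClosure_subset_rightPerpLE (Set.union_subset hrigid.subset_rightPerpLE hproj) hP
  · exact addClosure_subset_leftPerpLE (Set.union_subset (subset_leftPerpLE_rightPerpLE _ _)
      (projSet_subset_leftPerpLE _ _)) hP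

lemma isGeneratingIn_rightPerpLE [EnoughProjectives C] (hrigid : IsRigidLE X (n + 1))
    (hprec : IsPrecoveringIn (rightPerpLE X (n + 1)) X)
    (hproj : projSet ⊆ rightPerpLE X (n + 1)) :
    IsGeneratingIn (rightPerpLE X (n + 1)) {M | addClosure (X ∪ projSet) M} := by
  intro N hN
  obtain ⟨A₀, g, hA₀, hg⟩ := hprec N hN
  let p : A₀ ⊞ Projective.over N ⟶ N := biprod.desc g (Projective.π N)
  have hP : addClosure (X ∪ projSet) (A₀ ⊞ Projective.over N) :=
    .biprod (.of (.inl hA₀)) (.of (.inr (Projective.projective_over N)))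
  have hS : (ShortComplex.mk (kernel.ι p) p (kernel.condition p)).ShortExact :=
    { exact := ShortComplex.exact_kernel p
      epi_g := biprod.epi_desc_of_epi_right g (Projective.π N) }
  refine ⟨_, _, _, p, _, hS, X₁_mem_rightPerpLE_of_lift hS ?_ ?_ ?_, hP⟩
  · exact (addClosure_union_projSet_subset_projIn hrigid hproj hP).1
  · exact rightPerpLE_antitone X n.le_succ hN
  · intro A hA f
    obtain ⟨t, rfl⟩ := hg A hA f
    exact ⟨t ≫ biprod.inl, by simp [p]⟩

end Projectives

theorem stmt8_general [EnoughProjectives C] (X : Set C) (n : ℕ)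
    (hrigid : IsRigidLE X (n + 1))
    (hprec : IsPrecoveringIn (rightPerpLE X (n + 1)) X)
    (hproj : projSet ⊆ rightPerpLE X (n + 1)) :
    IsGeneratingIn (rightPerpLE X (n + 1)) (projIn (rightPerpLE X (n + 1))) ∧
    projIn (rightPerpLE X (n + 1)) = {M | addClosure (X ∪ projSet) M} := by
  have hgen := isGeneratingIn_rightPerpLE hrigid hprec hproj
  have hprojIn : projIn (rightPerpLE X (n + 1)) = {M | addClosure (X ∪ projSet) M} :=
    (projIn_subset_addClosure hgen).antisymm (addClosure_union_projSet_subset_projIn hrigid hproj)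
  exact ⟨hprojIn.symm ▸ hgen, hprojIn⟩

/-- Proposition 2.10: for an `(n+2)`-rigid precovering subcategory `X` of `C` with
`Proj(C) ⊆ X^{⊥_{≤ n+1}}`, the exact category `X^{⊥_{≤ n+1}}` has enough projectives, and
its projective objects are exactly `add(X ∪ Proj C)`. -/
theorem stmt8 [EnoughProjectives C] [EnoughInjectives C] (X : Set C) (n : ℕ)
    (hrigid : IsRigidLE X (n + 1))
    (hprec : IsPrecoveringIn (Set.univ : Set C) X)
    (hproj : projSet ⊆ rightPerpLE X (n + 1)) :
    (∀ N ∈ rightPerpLE X (n + 1),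
      ∃ (A P : C) (i : A ⟶ P) (p : P ⟶ N) (w : i ≫ p = 0),
        (ShortComplex.mk i p w).ShortExact ∧
        A ∈ rightPerpLE X (n + 1) ∧ P ∈ projIn (rightPerpLE X (n + 1))) ∧
    projIn (rightPerpLE X (n + 1)) = setOf (addClosure (X ∪ projSet)) :=
  stmt8_general X n hrigid (fun M _ => hprec M (Set.mem_univ M)) hproj
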